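/- Let b ∈ ℝᵐ₊₊, A ∈ ℝ^{m×n} with nonnegative entries and no zero row. Define f(x) = Σⱼ ( bⱼ log(bⱼ/(Ax)ⱼ) + (Ax)ⱼ − bⱼ ) on ℝⁿ₊₊ (the forward KL divergence D_φ(b, Ax)) and h(x) = −Σᵢ log xᵢ (Burg's entropy). Then for L = ‖b‖₁ = Σⱼ bⱼ, the function L·h − f is convex on ℝⁿ₊₊. -/

import Mathlib

/-!
With `h` Burg's entropy, `L * h - f` is, up to affine terms, the sum of a nonnegative multiple
of `h` and of the functions `b j * (h x + log ⟨a, x⟩)`, where `a` runs over the rows of `A`.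
Since `x i = exp (log x i)`, each function `h x + log ⟨a, x⟩` is the log-sum-exp
`log (∑ i, a i * exp (-∑ k ≠ i, log x k))` of convex functions. Log-sum-exp preserves convexity
because `log (∑ i, w i * exp (f i x)) ≤ c` means `∑ i, w i * exp (f i x - c) ≤ 1`, which exhibits
the epigraph as a sublevel set of a jointly convex function of `(x, c)`.
-/

open Real Matrix

section Convexity

variable {ι E : Type*} [AddCommMonoid E] {s : Set E} {t : Finset ι}

theorem convexOn_sum {𝕜 β : Type*} [Semiring 𝕜] [PartialOrder 𝕜] [AddCommMonoid β]
    [PartialOrder β] [IsOrderedAddMonoid β] [SMul 𝕜 E] [Module 𝕜 β] {f : ι → E → β}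
    (hs : Convex 𝕜 s) (hf : ∀ i ∈ t, ConvexOn 𝕜 s (f i)) :
    ConvexOn 𝕜 s fun x => ∑ i ∈ t, f i x := by
  rw [← Finset.sum_fn]
  exact Finset.sum_induction f (ConvexOn 𝕜 s) (fun _ _ => ConvexOn.add) (convexOn_const 0 hs) hf

variable [Module ℝ E]

theorem convexOn_exp_comp {f : E → ℝ} (hf : ConvexOn ℝ s f) : ConvexOn ℝ s fun x => exp (f x) :=
  ⟨hf.1, fun _ hx _ hy _ _ hp hq hpq =>
    (exp_le_exp.2 (hf.2 hx hy hp hq hpq)).trans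
      (convexOn_exp.2 (Set.mem_univ _) (Set.mem_univ _) hp hq hpq)⟩

theorem sum_mul_pos {w g : ι → ℝ} (hw : ∀ i ∈ t, 0 ≤ w i) (hw' : ∃ i ∈ t, w i ≠ 0)
    (hg : ∀ i ∈ t, 0 < g i) : 0 < ∑ i ∈ t, w i * g i := by
  obtain ⟨i, hi, hwi⟩ := hw'
  exact Finset.sum_pos' (fun k hk => mul_nonneg (hw k hk) (hg k hk).le)
    ⟨i, hi, mul_pos ((hw i hi).lt_of_ne' hwi) (hg i hi)⟩

theorem log_sum_mul_exp_le_iff {w f : ι → ℝ} (hw : ∀ i ∈ t, 0 ≤ w i) (hw' : ∃ i ∈ t, w i ≠ 0)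
    {c : ℝ} :
    log (∑ i ∈ t, w i * exp (f i)) ≤ c ↔ ∑ i ∈ t, w i * exp (f i - c) ≤ 1 := by
  have hpos : 0 < ∑ i ∈ t, w i * exp (f i) := sum_mul_pos hw hw' fun i _ => exp_pos (f i)
  simp only [exp_sub, ← mul_div_assoc, ← Finset.sum_div]
  rw [log_le_iff_le_exp hpos, div_le_one (exp_pos c)]

theorem convexOn_log_sum_mul_exp {w : ι → ℝ} {f : ι → E → ℝ} (hw : ∀ i ∈ t, 0 ≤ w i)
    (hw' : ∃ i ∈ t, w i ≠ 0) (hf : ∀ i ∈ t, ConvexOn ℝ s (f i)) :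
    ConvexOn ℝ s fun x => log (∑ i ∈ t, w i * exp (f i x)) := by
  have hs : Convex ℝ (LinearMap.fst ℝ E ℝ ⁻¹' s) :=
    let ⟨i, hi, _⟩ := hw'
    (hf i hi).1.linear_preimage _
  have hterm : ∀ i ∈ t, ConvexOn ℝ (LinearMap.fst ℝ E ℝ ⁻¹' s)
      fun p : E × ℝ => w i * exp (f i p.1 - p.2) := fun i hi =>
    (convexOn_exp_comp (((hf i hi).comp_linearMap (LinearMap.fst ℝ E ℝ)).sub
      ((LinearMap.snd ℝ E ℝ).concaveOn hs))).smul (hw i hi)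
  refine convexOn_of_convex_epigraph ?_
  simpa only [log_sum_mul_exp_le_iff hw hw'] using! (convexOn_sum hs hterm).convex_le 1

end Convexity

section PosOrthant

variable {ι : Type*}

/-- The open positive orthant `ℝⁿ₊₊`, with coordinates indexed by `ι`. -/
def posOrthant (ι : Type*) : Set (ι → ℝ) := {x | ∀ i, 0 < x i}

theorem convex_posOrthant : Convex ℝ (posOrthant ι) :=
  fun _ hx _ hy _ _ hp hq hpq i => convex_Ioi (0 : ℝ) (hx i) (hy i) hp hq hpq

theorem convexOn_neg_sum_log (t : Finset ι) :
    ConvexOn ℝ (posOrthant ι) fun x => -∑ i ∈ t, log (x i) := by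
  simp only [← Finset.sum_neg_distrib]
  exact convexOn_sum convex_posOrthant fun i _ =>
    (strictConcaveOn_log_Ioi.concaveOn.neg.comp_linearMap
      (LinearMap.proj i : (ι → ℝ) →ₗ[ℝ] ℝ)).subset (fun _ hx => hx i) convex_posOrthant

variable [Fintype ι] {a x : ι → ℝ}

theorem dotProduct_pos_of_mem_posOrthant (ha : ∀ i, 0 ≤ a i) (ha' : ∃ i, a i ≠ 0)
    (hx : x ∈ posOrthant ι) : 0 < a ⬝ᵥ x :=
  sum_mul_pos (fun i _ => ha i) (by simpa using ha') fun i _ => hx i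

/-- Burg's entropy, the kernel with respect to which relative smoothness is measured. -/
noncomputable def burgEntropy (x : ι → ℝ) : ℝ := -∑ i, log (x i)

theorem mul_exp_burgEntropy [DecidableEq ι] (i : ι) (hx : 0 < x i) :
    x i * exp (burgEntropy x) = exp (-∑ k ∈ Finset.univ.erase i, log (x k)) := by
  rw [burgEntropy, ← Finset.add_sum_erase _ _ (Finset.mem_univ i), neg_add, exp_add, exp_neg,
    exp_log hx, mul_inv_cancel_left₀ hx.ne']

theorem burgEntropy_add_log_dotProduct [DecidableEq ι] (ha : ∀ i, 0 ≤ a i)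
    (ha' : ∃ i, a i ≠ 0) (hx : x ∈ posOrthant ι) :
    burgEntropy x + log (a ⬝ᵥ x) =
      log (∑ i, a i * exp (-∑ k ∈ Finset.univ.erase i, log (x k))) := by
  have hax := dotProduct_pos_of_mem_posOrthant ha ha' hx
  calc burgEntropy x + log (a ⬝ᵥ x)
      = log ((a ⬝ᵥ x) * exp (burgEntropy x)) := by
        rw [log_mul hax.ne' (exp_ne_zero _), log_exp, add_comm]
    _ = log (∑ i, a i * exp (-∑ k ∈ Finset.univ.erase i, log (x k))) := by
        simp only [dotProduct, Finset.sum_mul, mul_assoc, mul_exp_burgEntropy _ (hx _)]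

theorem convexOn_burgEntropy_add_log_dotProduct (ha : ∀ i, 0 ≤ a i) (ha' : ∃ i, a i ≠ 0) :
    ConvexOn ℝ (posOrthant ι) fun x => burgEntropy x + log (a ⬝ᵥ x) := by
  classical
  have hlse : ConvexOn ℝ (posOrthant ι)
      fun x => log (∑ i, a i * exp (-∑ k ∈ Finset.univ.erase i, log (x k))) :=
    convexOn_log_sum_mul_exp (fun i _ => ha i) (by simpa using ha')
      fun i _ => convexOn_neg_sum_log (Finset.univ.erase i)
  exact hlse.congr fun x hx => (burgEntropy_add_log_dotProduct ha ha' hx).symm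

end PosOrthant

section KullbackLeibler

variable {ι κ : Type*} [Fintype ι] [Fintype κ]

/-- The Kullback–Leibler divergence `D_φ(u, v)` of vectors that need not be normalized, that is,
the Bregman divergence of the Boltzmann–Shannon entropy. It is meaningful for `0 ≤ u` and `0 < v`,
where `0 * log 0 = 0` is the usual convention. -/
noncomputable def klDivergence (u v : κ → ℝ) : ℝ :=
  ∑ j, (u j * log (u j / v j) + v j - u j)

theorem mul_log_div (u : ℝ) {v : ℝ} (hv : v ≠ 0) : u * log (u / v) = u * log u - u * log v := by
  rcases eq_or_ne u 0 with rfl | hu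
  · simp
  · rw [log_div hu hv, mul_sub]

theorem klDivergence_eq {u v : κ → ℝ} (hv : ∀ j, v j ≠ 0) :
    klDivergence u v = ∑ j, (u j * log (u j) - u j) - ∑ j, (u j * log (v j) - v j) := by
  rw [klDivergence, ← Finset.sum_sub_distrib]
  refine Finset.sum_congr rfl fun j _ => ?_
  rw [mul_log_div _ (hv j)]
  ring

theorem mul_burgEntropy_sub_klDivergence {b v : κ → ℝ} (hv : ∀ j, v j ≠ 0) (L : ℝ) (x : ι → ℝ) :
    L * burgEntropy x - klDivergence b v =
      (L - ∑ j, b j) * burgEntropy x + ∑ j, (b j * (burgEntropy x + log (v j)) - v j)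
        - ∑ j, (b j * log (b j) - b j) := by
  rw [klDivergence_eq hv]
  simp only [mul_add, Finset.sum_sub_distrib, Finset.sum_add_distrib, ← Finset.sum_mul]
  ring

theorem stmt12_general {b : κ → ℝ} (hb : ∀ j, 0 ≤ b j) {A : Matrix κ ι ℝ}
    (hA : ∀ j i, 0 ≤ A j i) (hrow : ∀ j, ∃ i, A j i ≠ 0) {L : ℝ} (hL : ∑ j, b j ≤ L) :
    ConvexOn ℝ (posOrthant ι) fun x => L * burgEntropy x - klDivergence b (A *ᵥ x) := by
  have hpos : ∀ x ∈ posOrthant ι, ∀ j, 0 < (A *ᵥ x) j := fun x hx j =>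
    dotProduct_pos_of_mem_posOrthant (hA j) (hrow j) hx
  have hrest : ConvexOn ℝ (posOrthant ι) fun x => (L - ∑ j, b j) * burgEntropy x :=
    (convexOn_neg_sum_log Finset.univ).smul (sub_nonneg.2 hL)
  have hrows : ∀ j ∈ Finset.univ, ConvexOn ℝ (posOrthant ι)
      fun x => b j * (burgEntropy x + log ((A *ᵥ x) j)) - (A *ᵥ x) j := fun j _ =>
    ((convexOn_burgEntropy_add_log_dotProduct (hA j) (hrow j)).smul (hb j)).sub
      ((LinearMap.proj j ∘ₗ A.mulVecLin).concaveOn convex_posOrthant)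
  refine ((hrest.add (convexOn_sum convex_posOrthant hrows)).sub
    (concaveOn_const (∑ j, (b j * log (b j) - b j)) convex_posOrthant)).congr fun x hx => ?_
  exact (mul_burgEntropy_sub_klDivergence (fun j => (hpos x hx j).ne') L x).symm

end KullbackLeibler

/-- Lipschitz-like convexity condition for the forward KL data fidelity with Burg's entropy:
for L = ‖b‖₁, the function L·h − f is convex on ℝⁿ₊₊, where
f(x) = Σⱼ ( bⱼ log(bⱼ/(Ax)ⱼ) + (Ax)ⱼ − bⱼ ) and h(x) = −Σᵢ log xᵢ. -/
theorem stmt12 (m n : ℕ) (b : Fin m → ℝ) (hb : ∀ j, 0 < b j)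
    (A : Matrix (Fin m) (Fin n) ℝ) (hA : ∀ j i, 0 ≤ A j i)
    (hrow : ∀ j, ∃ i, A j i ≠ 0) :
    ConvexOn ℝ {x : Fin n → ℝ | ∀ i, 0 < x i}
      (fun x =>
        (∑ j, b j) * (-∑ i, Real.log (x i)) -
          ∑ j, (b j * Real.log (b j / A.mulVec x j) + A.mulVec x j - b j)) :=
  stmt12_general (fun j => (hb j).le) hA hrow le_rfl
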